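/- On ℓ²(ℤ) with orthonormal basis (φ_j)_{j∈ℤ}, let the mode operator C_n (n ≥ 1 an integer) have Hermitian part R = diag(…,1,1,0,1,1,…) (zero only at j = 0) and skew part with matrix −(i n/2)(δ_{j+1,k} + δ_{j−1,k}). Let Y_n be the identity modified in the (0,1),(1,0) entries to ∓ i/(2n). Then Y_n is self-adjoint with spectrum {1 − 1/(2n), 1, 1 + 1/(2n)}, in particular (1 − 1/(2n))I ≤ Y_n ≤ (1 + 1/(2n))I, and C_n* Y_n + Y_n C_n ≥ 2λ₀ Y_n holds with λ₀ = 1/2 − 1/(6√2) − (1/3)√(7/16 + 1/√8). -/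

import Mathlib

open ContinuousLinearMap
open scoped InnerProductSpace

open InnerProductSpace (rankOne rankOne_apply)

/-!
On the plane spanned by `φ 0` and `φ 1`, the operator `Y - 1` is `1 / (2n)` times the Pauli matrix
`σ = σ_y`, and it vanishes on the orthogonal complement. Since `σ ^ 3 = σ`, the spectrum of `σ` is
`{-1, 0, 1}`.

The damping `R` does not act on the mode `φ 0`, and the skew-adjoint hopping operator `J` drops out
of `Re ⟪C x, x⟫`. It does enter `Re ⟪C x, Y x⟫` through its pairing with `σ`, where the factors `n`
and `1 / (2n)` cancel: this transfers damping from `φ 1` to `φ 0` at a rate independent of `n`. All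
indefinite terms of the resulting Hermitian form live on the modes `-1, 0, 1, 2`, and
`2ab ≤ a ^ 2 + b ^ 2` absorbs them at the rate `1 / 8 ≥ λ₀`.
-/

open Polynomial in
theorem spectrum_subset_of_pow_three_eq_self (𝕜 : Type*) {A : Type*} [Field 𝕜] [Ring A]
    [Algebra 𝕜 A] {a : A} (ha : a ^ 3 = a) : spectrum 𝕜 a ⊆ {-1, 0, 1} := by
  nontriviality A
  intro μ hμ
  have hroot := spectrum.subset_polynomial_aeval a (X ^ 3 - X) ⟨μ, hμ, rfl⟩
  have hfactor : μ * ((μ - 1) * (μ + 1)) = 0 := by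
    have : μ ^ 3 - μ = 0 := by simpa [ha] using hroot
    linear_combination this
  rcases mul_eq_zero.mp hfactor with h | h
  · simp [h]
  · rcases mul_eq_zero.mp h with h | h
    · simp [sub_eq_zero.mp h]
    · simp [eq_neg_of_add_eq_zero_left h]

theorem mem_spectrum_of_apply_eq_smul {𝕜 E : Type*} [Field 𝕜]
    [AddCommGroup E] [TopologicalSpace E] [IsTopologicalAddGroup E] [Module 𝕜 E]
    [ContinuousConstSMul 𝕜 E] {A : E →L[𝕜] E} {μ : 𝕜} {v : E} (hv : v ≠ 0) (h : A v = μ • v) :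
    μ ∈ spectrum 𝕜 A :=
  fun hunit ↦ (Module.End.hasEigenvalue_of_hasEigenvector (f := (A : Module.End 𝕜 E))
    ⟨Module.End.mem_eigenspace_iff.mpr h, hv⟩).mem_spectrum (hunit.map toLinearMapRingHom)

section RCLike

variable {ι 𝕜 E : Type*} [RCLike 𝕜] [NormedAddCommGroup E] [InnerProductSpace 𝕜 E]

theorem re_inner_adjoint_mul_add_mul [CompleteSpace E] {A Y : E →L[𝕜] E} (hY : IsSelfAdjoint Y)
    (x : E) :
    RCLike.re ⟪(adjoint A * Y + Y * A) x, x⟫_𝕜 = 2 * RCLike.re ⟪A x, Y x⟫_𝕜 := by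
  have hsymm : ⟪Y (A x), x⟫_𝕜 = ⟪A x, Y x⟫_𝕜 := hY.isSymmetric (A x) x
  rw [add_apply, inner_add_left, mul_apply_eq_comp, mul_apply_eq_comp, adjoint_inner_left, hsymm,
    map_add, inner_re_symm (Y x)]
  ring

theorem re_inner_self_eq_zero_of_adjoint_eq_neg [CompleteSpace E] {J : E →L[𝕜] E}
    (hJ : adjoint J = -J) (x : E) : RCLike.re ⟪J x, x⟫_𝕜 = 0 := by
  have h : RCLike.re ⟪J x, x⟫_𝕜 = -RCLike.re ⟪J x, x⟫_𝕜 := by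
    conv_lhs => rw [inner_re_symm, ← adjoint_inner_left, hJ, neg_apply, inner_neg_left, map_neg]
  linarith

theorem continuousLinearMap_ext_hilbertBasis {F : Type*} [AddCommMonoid F] [Module 𝕜 F]
    [TopologicalSpace F] [T2Space F] (φ : HilbertBasis ι 𝕜 E) {A B : E →L[𝕜] F}
    (h : ∀ j, A (φ j) = B (φ j)) : A = B :=
  ContinuousLinearMap.ext_on
    (Submodule.dense_iff_topologicalClosure_eq_top.mpr φ.dense_span)
    (Set.forall_mem_range.mpr h)

theorem eq_adjoint_of_inner_hilbertBasis [CompleteSpace E] (φ : HilbertBasis ι 𝕜 E)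
    {A B : E →L[𝕜] E} (h : ∀ j k, ⟪A (φ j), φ k⟫_𝕜 = ⟪φ j, B (φ k)⟫_𝕜) : A = adjoint B := by
  refine continuousLinearMap_ext_hilbertBasis φ fun j ↦ φ.repr.injective ?_
  ext k
  rw [φ.repr_apply_apply, φ.repr_apply_apply, adjoint_inner_right, ← inner_conj_symm, h,
    inner_conj_symm]

theorem eq_one_sub_rankOne_of_hilbertBasis (φ : HilbertBasis ι 𝕜 E) [DecidableEq ι] {k : ι}
    {R : E →L[𝕜] E} (hR : ∀ j, R (φ j) = if j = k then 0 else φ j) :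
    R = 1 - rankOne 𝕜 (φ k) (φ k) := by
  refine continuousLinearMap_ext_hilbertBasis φ fun j ↦ ?_
  obtain rfl | hj := eq_or_ne j k
  · simp [hR, φ.orthonormal.norm_eq_one]
  · simp [hR, hj, φ.orthonormal.inner_eq_zero hj.symm]

theorem norm_inner_mul_inner (x e f : E) :
    ‖⟪x, e⟫_𝕜 * ⟪f, x⟫_𝕜‖ = ‖⟪e, x⟫_𝕜‖ * ‖⟪f, x⟫_𝕜‖ := by
  rw [norm_mul, norm_inner_symm]

end RCLike

section ModeWeight

variable {H : Type*} [NormedAddCommGroup H] [InnerProductSpace ℂ H]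

theorem adjoint_eq_neg_of_hopping [CompleteSpace H] (φ : HilbertBasis ℤ ℂ H) {J : H →L[ℂ] H}
    {a : ℝ} (hJ : ∀ j, J (φ j) = (a * Complex.I) • (φ (j + 1) + φ (j - 1))) :
    adjoint J = -J := by
  refine (eq_adjoint_of_inner_hilbertBasis φ fun j k ↦ ?_).symm
  have hsucc : j + 1 = k ↔ j = k - 1 := by lia
  have hpred : j - 1 = k ↔ j = k + 1 := by lia
  simp only [neg_apply, hJ, inner_neg_left, inner_smul_left, inner_smul_right, inner_add_left,
    inner_add_right, orthonormal_iff_ite.mp φ.orthonormal, hsucc, hpred, map_mul,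
    Complex.conj_ofReal, Complex.conj_I]
  ring

/-- The operator acting on `span {e, f}`, for orthonormal `e` and `f`, as the Pauli matrix
`σ_y = !![0, -i; i, 0]`, and as zero on the orthogonal complement. -/
noncomputable def pauliY (e f : H) : H →L[ℂ] H :=
  Complex.I • (rankOne ℂ f e - rankOne ℂ e f)

theorem pauliY_apply (e f x : H) :
    pauliY e f x = Complex.I • (⟪e, x⟫_ℂ • f - ⟪f, x⟫_ℂ • e) := by
  simp [pauliY]

theorem isSelfAdjoint_pauliY [CompleteSpace H] (e f : H) : IsSelfAdjoint (pauliY e f) := by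
  refine IsSelfAdjoint.I_smul_of_mem_skewAdjoint (K := ℂ) ?_
  simp [skewAdjoint.mem_iff, star_eq_adjoint]

theorem re_inner_pauliY_self (e f x : H) :
    (⟪pauliY e f x, x⟫_ℂ).re = 2 * (⟪x, e⟫_ℂ * ⟪f, x⟫_ℂ).im := by
  have hconj : ⟪x, f⟫_ℂ * ⟪e, x⟫_ℂ = starRingEnd ℂ (⟪x, e⟫_ℂ * ⟪f, x⟫_ℂ) := by simp [mul_comm]
  have hcomplex : ⟪pauliY e f x, x⟫_ℂ =
      -Complex.I * (⟪x, e⟫_ℂ * ⟪f, x⟫_ℂ - starRingEnd ℂ (⟪x, e⟫_ℂ * ⟪f, x⟫_ℂ)) := by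
    simp only [pauliY_apply, inner_smul_left, inner_sub_left, inner_conj_symm, Complex.conj_I,
      hconj]
  rw [hcomplex, Complex.sub_conj]
  simp

theorem inner_skew_pauliY [CompleteSpace H] {J : H →L[ℂ] H} (hJ : adjoint J = -J) {a : ℝ}
    {e f u z : H} (he : J e = (a * Complex.I) • (f + u)) (hf : J f = (a * Complex.I) • (z + e))
    (x : H) :
    ⟪J x, pauliY e f x⟫_ℂ =
      a * (‖⟪e, x⟫_ℂ‖ ^ 2 - ‖⟪f, x⟫_ℂ‖ ^ 2 + ⟪x, z⟫_ℂ * ⟪e, x⟫_ℂ - ⟪x, u⟫_ℂ * ⟪f, x⟫_ℂ) := by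
  have hskew (y : H) : ⟪J x, y⟫_ℂ = -⟪x, J y⟫_ℂ := by
    rw [← adjoint_inner_right, hJ, neg_apply, inner_neg_right]
  have hsq (y : H) : (‖⟪y, x⟫_ℂ‖ : ℂ) ^ 2 = ⟪y, x⟫_ℂ * ⟪x, y⟫_ℂ := by
    rw [← Complex.mul_conj', inner_conj_symm]
  simp only [pauliY_apply, inner_smul_right, inner_sub_right]
  simp only [hskew, he, hf, inner_smul_right, inner_add_right, hsq]
  linear_combination (-(a : ℂ)) * (⟪e, x⟫_ℂ * (⟪x, z⟫_ℂ + ⟪x, e⟫_ℂ)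
    - ⟪f, x⟫_ℂ * (⟪x, f⟫_ℂ + ⟪x, u⟫_ℂ)) * Complex.I_sq

section Orthonormal

variable {ι : Type*} {φ : ι → H} (hφ : Orthonormal ℂ φ) {i j : ι} (hij : i ≠ j)
include hφ hij

theorem pauliY_apply_left : pauliY (φ i) (φ j) (φ i) = Complex.I • φ j := by
  simp [pauliY_apply, hφ.inner_eq_zero hij.symm, hφ.norm_eq_one]

theorem pauliY_apply_right : pauliY (φ i) (φ j) (φ j) = -Complex.I • φ i := by
  simp [pauliY_apply, hφ.inner_eq_zero hij, hφ.norm_eq_one]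

theorem pauliY_pow_three : pauliY (φ i) (φ j) ^ 3 = pauliY (φ i) (φ j) := by
  ext x
  rw [pow_succ, pow_two, mul_apply_eq_comp, mul_apply_eq_comp, pauliY_apply _ _ x]
  simp only [map_smul, map_sub, pauliY_apply_left hφ hij, pauliY_apply_right hφ hij, smul_smul,
    smul_sub]
  simp only [mul_comm _ Complex.I, mul_neg, ← mul_assoc, Complex.I_mul_I, neg_mul, one_mul, neg_neg]

theorem spectrum_pauliY {k : ι} (hik : i ≠ k) (hjk : j ≠ k) :
    spectrum ℂ (pauliY (φ i) (φ j)) = {-1, 0, 1} := by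
  refine (spectrum_subset_of_pow_three_eq_self ℂ (pauliY_pow_three hφ hij)).antisymm ?_
  have hne (s : ℂ) : φ i + s • φ j ≠ 0 := fun h ↦ by
    simpa [inner_add_right, inner_smul_right, hφ.inner_eq_zero hij, hφ.norm_eq_one]
      using congrArg (⟪φ i, ·⟫_ℂ) h
  rintro _ (rfl | rfl | rfl)
  · refine mem_spectrum_of_apply_eq_smul (hne (-Complex.I)) ?_
    simp [pauliY_apply_left hφ hij, pauliY_apply_right hφ hij, smul_smul, add_comm]
  · refine mem_spectrum_of_apply_eq_smul (hφ.ne_zero k) ?_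
    simp [pauliY_apply, hφ.inner_eq_zero hik, hφ.inner_eq_zero hjk]
  · refine mem_spectrum_of_apply_eq_smul (hne Complex.I) ?_
    simp [pauliY_apply_left hφ hij, pauliY_apply_right hφ hij, smul_smul, add_comm]

theorem abs_re_inner_pauliY_self_le (x : H) :
    |(⟪pauliY (φ i) (φ j) x, x⟫_ℂ).re| ≤ ‖x‖ ^ 2 := by
  classical
  calc |(⟪pauliY (φ i) (φ j) x, x⟫_ℂ).re|
      = 2 * |(⟪x, φ i⟫_ℂ * ⟪φ j, x⟫_ℂ).im| := by rw [re_inner_pauliY_self, abs_mul, abs_two]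
    _ ≤ 2 * (‖⟪φ i, x⟫_ℂ‖ * ‖⟪φ j, x⟫_ℂ‖) := by
      rw [← norm_inner_mul_inner]
      gcongr
      exact Complex.abs_im_le_norm _
    _ ≤ ‖⟪φ i, x⟫_ℂ‖ ^ 2 + ‖⟪φ j, x⟫_ℂ‖ ^ 2 := by
      rw [← mul_assoc]
      exact two_mul_le_add_sq _ _
    _ = ∑ l ∈ {i, j}, ‖⟪φ l, x⟫_ℂ‖ ^ 2 := by
      rw [Finset.sum_pair hij]
    _ ≤ ‖x‖ ^ 2 := hφ.sum_inner_products_le x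

end Orthonormal

/-- The Lyapunov weight `1 + c σ_y`, with the Pauli matrix `σ_y` acting on `span {e, f}`. The weight
`Y_n` of the `n`-th mode operator is the case `c = 1 / (2n)`, `e = φ 0`, `f = φ 1`. -/
noncomputable def modeWeight (c : ℝ) (e f : H) : H →L[ℂ] H :=
  1 + (c : ℂ) • pauliY e f

theorem isSelfAdjoint_modeWeight [CompleteSpace H] (c : ℝ) (e f : H) :
    IsSelfAdjoint (modeWeight c e f) :=
  (IsSelfAdjoint.one _).add <|
    IsSelfAdjoint.smul (Complex.conj_ofReal c) (isSelfAdjoint_pauliY e f)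

theorem re_inner_modeWeight_self (c : ℝ) (e f x : H) :
    (⟪modeWeight c e f x, x⟫_ℂ).re = ‖x‖ ^ 2 + c * (⟪pauliY e f x, x⟫_ℂ).re := by
  simp [modeWeight, ← Complex.ofReal_pow]

theorem re_inner_sub_rankOne_modeWeight {e f : H} (he : ‖e‖ = 1) (hef : ⟪e, f⟫_ℂ = 0) (c : ℝ)
    (x : H) :
    (⟪(1 - rankOne ℂ e e) x, modeWeight c e f x⟫_ℂ).re =
      ‖x‖ ^ 2 - ‖⟪e, x⟫_ℂ‖ ^ 2 + c * (⟪x, e⟫_ℂ * ⟪f, x⟫_ℂ).im := by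
  have hcross : (⟪x, pauliY e f x⟫_ℂ).re = 2 * (⟪x, e⟫_ℂ * ⟪f, x⟫_ℂ).im := by
    rw [← re_inner_pauliY_self]
    exact inner_re_symm (𝕜 := ℂ) _ _
  have hproj : ⟪⟪e, x⟫_ℂ • e, pauliY e f x⟫_ℂ = -Complex.I * (⟪x, e⟫_ℂ * ⟪f, x⟫_ℂ) := by
    rw [pauliY_apply, inner_smul_left, inner_smul_right, inner_sub_right, inner_smul_right,
      inner_smul_right, hef, inner_self_eq_one_of_norm_eq_one he, inner_conj_symm]
    ring
  have hsq : ⟪⟪e, x⟫_ℂ • e, x⟫_ℂ = (‖⟪e, x⟫_ℂ‖ ^ 2 : ℝ) := by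
    rw [inner_smul_left, Complex.conj_mul', Complex.ofReal_pow]
  have hself : ⟪x, x⟫_ℂ = (‖x‖ ^ 2 : ℝ) := by
    rw [Complex.ofReal_pow]
    exact inner_self_eq_norm_sq_to_K x
  simp only [modeWeight, sub_apply, add_apply, smul_apply, one_apply_eq_self, rankOne_apply,
    inner_sub_left, inner_add_right, inner_smul_right (𝕜 := ℂ), hproj, hsq, hself, Complex.sub_re,
    Complex.add_re, Complex.re_ofReal_mul, hcross, Complex.ofReal_re]
  rw [neg_mul, Complex.neg_re, Complex.I_mul_re]
  ring

theorem re_inner_skew_modeWeight [CompleteSpace H] {J : H →L[ℂ] H} (hJ : adjoint J = -J) {a : ℝ}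
    {e f u z : H} (he : J e = (a * Complex.I) • (f + u)) (hf : J f = (a * Complex.I) • (z + e))
    (c : ℝ) (x : H) :
    (⟪J x, modeWeight c e f x⟫_ℂ).re =
      c * a * (‖⟪e, x⟫_ℂ‖ ^ 2 - ‖⟪f, x⟫_ℂ‖ ^ 2
          + (⟪x, z⟫_ℂ * ⟪e, x⟫_ℂ).re - (⟪x, u⟫_ℂ * ⟪f, x⟫_ℂ).re) := by
  have hdiag : (⟪J x, x⟫_ℂ).re = 0 := re_inner_self_eq_zero_of_adjoint_eq_neg hJ x
  have hpauli : (⟪J x, pauliY e f x⟫_ℂ).re = a * (‖⟪e, x⟫_ℂ‖ ^ 2 - ‖⟪f, x⟫_ℂ‖ ^ 2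
      + (⟪x, z⟫_ℂ * ⟪e, x⟫_ℂ).re - (⟪x, u⟫_ℂ * ⟪f, x⟫_ℂ).re) := by
    rw [inner_skew_pauliY hJ he hf, Complex.re_ofReal_mul]
    simp [← Complex.ofReal_pow]
  rw [modeWeight, add_apply, one_apply_eq_self, smul_apply, inner_add_right, inner_smul_right,
    Complex.add_re, Complex.re_ofReal_mul, hdiag, hpauli, zero_add, mul_assoc]

section Orthonormal

variable {ι : Type*} {φ : ι → H} (hφ : Orthonormal ℂ φ) {i j : ι} (hij : i ≠ j)
include hφ hij

theorem modeWeight_bounds (c : ℝ) (x : H) :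
    (1 - |c|) * ‖x‖ ^ 2 ≤ (⟪modeWeight c (φ i) (φ j) x, x⟫_ℂ).re ∧
      (⟪modeWeight c (φ i) (φ j) x, x⟫_ℂ).re ≤ (1 + |c|) * ‖x‖ ^ 2 := by
  have h : |c * (⟪pauliY (φ i) (φ j) x, x⟫_ℂ).re| ≤ |c| * ‖x‖ ^ 2 := by
    rw [abs_mul]
    gcongr
    exact abs_re_inner_pauliY_self_le hφ hij x
  rw [re_inner_modeWeight_self]
  constructor <;> linarith [abs_le.mp h]

open Pointwise in
theorem spectrum_modeWeight {k : ι} (hik : i ≠ k) (hjk : j ≠ k) (c : ℝ) :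
    spectrum ℂ (modeWeight c (φ i) (φ j)) = {1 - (c : ℂ), 1, 1 + (c : ℂ)} := by
  have : Nontrivial H := ⟨φ i, 0, hφ.ne_zero i⟩
  have hpauli := spectrum_pauliY hφ hij hik hjk
  have hnonempty : (spectrum ℂ (pauliY (φ i) (φ j))).Nonempty := by simp [hpauli]
  rw [modeWeight, ← map_one (algebraMap ℂ (H →L[ℂ] H)), ← spectrum.singleton_add_eq,
    spectrum.smul_eq_smul _ _ hnonempty, hpauli]
  simp [Set.singleton_add, Set.smul_set_insert, Set.image_insert_eq, sub_eq_add_neg]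

end Orthonormal

theorem lyapunov_quadratic_form_le {c u v w z N p q r : ℝ} (hc : |c| ≤ 1 / 2)
    (hN : u ^ 2 + v ^ 2 + w ^ 2 + z ^ 2 ≤ N) (hp : |p| ≤ v * w) (hq : |q| ≤ z * v)
    (hr : |r| ≤ u * w) :
    1 / 4 * (N + c * (2 * p)) ≤
      2 * (N - v ^ 2 + c * p + 1 / 4 * (v ^ 2 - w ^ 2 + q - r)) := by
  have hcp : -(1 / 2 * (v * w)) ≤ c * p := (abs_le.mp <| by rw [abs_mul]; gcongr).1
  -- `hN` leaves `7 / 4 - 3 / 2 = 1 / 4` of `v ^ 2`, which the next two estimates split as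
  -- `3 / 16 + 1 / 16`.
  have hvw : 3 / 4 * (v * w) ≤ 3 / 16 * v ^ 2 + 3 / 4 * w ^ 2 := by
    linarith [sq_nonneg (v - 2 * w)]
  have hzv : 1 / 2 * (z * v) ≤ z ^ 2 + 1 / 16 * v ^ 2 := by linarith [sq_nonneg (4 * z - v)]
  have huw : 1 / 2 * (u * w) ≤ 1 / 4 * u ^ 2 + 1 / 4 * w ^ 2 := by linarith [sq_nonneg (u - w)]
  linarith [(abs_le.mp hq).1, (abs_le.mp hr).2, sq_nonneg u, sq_nonneg w, sq_nonneg z]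

theorem lyapunov_modeWeight [CompleteSpace H] {u e f z : H} (horth : Orthonormal ℂ ![u, e, f, z])
    {J C : H →L[ℂ] H} (hJ : adjoint J = -J) {a c : ℝ} (he : J e = (a * Complex.I) • (f + u))
    (hf : J f = (a * Complex.I) • (z + e)) (hC : C = 1 - rankOne ℂ e e - J)
    (hca : c * a = -(1 / 4)) (hc : |c| ≤ 1 / 2) (x : H) :
    1 / 4 * (⟪modeWeight c e f x, x⟫_ℂ).re ≤
      (⟪(adjoint C * modeWeight c e f + modeWeight c e f * C) x, x⟫_ℂ).re := by
  have hnorm : ‖e‖ = 1 := horth.norm_eq_one 1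
  have hef : ⟪e, f⟫_ℂ = 0 := horth.inner_eq_zero (i := 1) (j := 2) (by decide)
  have hbessel :
      ‖⟪u, x⟫_ℂ‖ ^ 2 + ‖⟪e, x⟫_ℂ‖ ^ 2 + ‖⟪f, x⟫_ℂ‖ ^ 2 + ‖⟪z, x⟫_ℂ‖ ^ 2 ≤ ‖x‖ ^ 2 := by
    simpa [Fin.sum_univ_four] using horth.sum_inner_products_le x (s := Finset.univ)
  have hp : |(⟪x, e⟫_ℂ * ⟪f, x⟫_ℂ).im| ≤ ‖⟪e, x⟫_ℂ‖ * ‖⟪f, x⟫_ℂ‖ :=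
    norm_inner_mul_inner (𝕜 := ℂ) x e f ▸ Complex.abs_im_le_norm _
  have hq : |(⟪x, z⟫_ℂ * ⟪e, x⟫_ℂ).re| ≤ ‖⟪z, x⟫_ℂ‖ * ‖⟪e, x⟫_ℂ‖ :=
    norm_inner_mul_inner (𝕜 := ℂ) x z e ▸ Complex.abs_re_le_norm _
  have hr : |(⟪x, u⟫_ℂ * ⟪f, x⟫_ℂ).re| ≤ ‖⟪u, x⟫_ℂ‖ * ‖⟪f, x⟫_ℂ‖ :=
    norm_inner_mul_inner (𝕜 := ℂ) x u f ▸ Complex.abs_re_le_norm _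
  have hform : (⟪(adjoint C * modeWeight c e f + modeWeight c e f * C) x, x⟫_ℂ).re =
      2 * (⟪C x, modeWeight c e f x⟫_ℂ).re :=
    re_inner_adjoint_mul_add_mul (isSelfAdjoint_modeWeight c e f) x
  rw [hform, hC, sub_apply, inner_sub_left, Complex.sub_re,
    re_inner_sub_rankOne_modeWeight hnorm hef, re_inner_skew_modeWeight hJ he hf,
    re_inner_modeWeight_self, re_inner_pauliY_self, hca]
  linarith [lyapunov_quadratic_form_le hc hbessel hp hq hr]

theorem eq_modeWeight_of_hilbertBasis {ι : Type*} [DecidableEq ι] (φ : HilbertBasis ι ℂ H)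
    {p q : ι} (hpq : p ≠ q) {c : ℝ} {Y : H →L[ℂ] H}
    (hY : ∀ j, Y (φ j) = φ j + (if j = q then (-(c * Complex.I)) • φ p else 0)
      + (if j = p then (c * Complex.I) • φ q else 0)) :
    Y = modeWeight c (φ p) (φ q) := by
  refine continuousLinearMap_ext_hilbertBasis φ fun j ↦ ?_
  rw [hY, modeWeight, add_apply, one_apply_eq_self, smul_apply]
  obtain rfl | hjp := eq_or_ne j p
  · simp [hpq, pauliY_apply_left φ.orthonormal hpq, smul_smul]
  obtain rfl | hjq := eq_or_ne j q
  · simp [hjp, pauliY_apply_right φ.orthonormal hpq, smul_smul]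
  · simp [hjp, hjq, pauliY_apply, φ.orthonormal.inner_eq_zero hjp.symm,
      φ.orthonormal.inner_eq_zero hjq.symm]

end ModeWeight

theorem lorentz_rate_le :
    1 / 2 - 1 / (6 * √2) - 1 / 3 * √(7 / 16 + 1 / √8) ≤ 1 / 8 := by
  have hsqrt_two : √2 ≤ 3 / 2 := Real.sqrt_le_iff.mpr (by norm_num)
  have hsqrt_eight : √8 ≤ 3 := Real.sqrt_le_iff.mpr (by norm_num)
  have hinv_two : 1 / 9 ≤ 1 / (6 * √2) :=
    one_div_le_one_div_of_le (by positivity) (by linarith)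
  have hinv_eight : 1 / 3 ≤ 1 / √8 := one_div_le_one_div_of_le (by positivity) hsqrt_eight
  have hsqrt : 4 / 5 ≤ √(7 / 16 + 1 / √8) := Real.le_sqrt_of_sq_le (by linarith)
  linarith

theorem lorentz_mode_lyapunov_inequality_general
    {H : Type*} [NormedAddCommGroup H] [InnerProductSpace ℂ H] [CompleteSpace H]
    (φ : HilbertBasis ℤ ℂ H) {n : ℝ} (hn : 1 ≤ |n|) {R J C Y : H →L[ℂ] H}
    (hR : ∀ j : ℤ, R (φ j) = if j = 0 then 0 else φ j)
    (hJ : ∀ j : ℤ, J (φ j) = (-(Complex.I * (n : ℂ) / 2)) • (φ (j + 1) + φ (j - 1)))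
    (hC : C = R - J)
    (hY : ∀ j : ℤ, Y (φ j) = φ j
        + (if j = 1 then (-(Complex.I / (2 * (n : ℂ)))) • φ 0 else 0)
        + (if j = 0 then (Complex.I / (2 * (n : ℂ))) • φ 1 else 0))
    {r : ℝ} (hr : r ≤ 1 / 8) :
    IsSelfAdjoint Y ∧
    spectrum ℂ Y = {((1 : ℂ) - 1 / (2 * (n : ℂ))), 1, ((1 : ℂ) + 1 / (2 * (n : ℂ)))} ∧
    (∀ x : H, (1 - 1 / (2 * |n|)) * ‖x‖ ^ 2 ≤ (⟪Y x, x⟫_ℂ).re ∧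
        (⟪Y x, x⟫_ℂ).re ≤ (1 + 1 / (2 * |n|)) * ‖x‖ ^ 2) ∧
    (∀ x : H, 2 * r * (⟪Y x, x⟫_ℂ).re ≤ (⟪(adjoint C * Y + Y * C) x, x⟫_ℂ).re) := by
  have hn0 : n ≠ 0 := abs_pos.mp (one_pos.trans_le hn)
  have hc_abs : |1 / (2 * n)| = 1 / (2 * |n|) := by simp
  have hc : |1 / (2 * n)| ≤ 1 / 2 := by
    rw [hc_abs]
    exact one_div_le_one_div_of_le two_pos (by linarith)
  have hJ' (j : ℤ) : J (φ j) = ((-n / 2 : ℝ) * Complex.I) • (φ (j + 1) + φ (j - 1)) := by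
    rw [hJ]
    congr 1
    push_cast
    ring
  have hY' : Y = modeWeight (1 / (2 * n)) (φ 0) (φ 1) := by
    have hcoeff : Complex.I / (2 * (n : ℂ)) = ((1 / (2 * n) : ℝ) : ℂ) * Complex.I := by
      push_cast
      ring
    exact eq_modeWeight_of_hilbertBasis φ zero_ne_one (hcoeff ▸ hY)
  obtain rfl := eq_one_sub_rankOne_of_hilbertBasis φ hR
  subst hY'
  have hbounds := modeWeight_bounds φ.orthonormal (zero_ne_one (α := ℤ)) (1 / (2 * n))
  have hmodes : Orthonormal ℂ ![φ (-1), φ 0, φ 1, φ 2] := by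
    convert φ.orthonormal.comp ![-1, 0, 1, 2] (by decide) using 1
    ext k
    fin_cases k <;> rfl
  refine ⟨isSelfAdjoint_modeWeight _ _ _, ?_, hc_abs ▸ hbounds, fun x ↦ ?_⟩
  · simpa using spectrum_modeWeight φ.orthonormal (zero_ne_one (α := ℤ)) (k := 2) (by decide)
      (by decide) (1 / (2 * n))
  · have hnonneg : 0 ≤ (⟪modeWeight (1 / (2 * n)) (φ 0) (φ 1) x, x⟫_ℂ).re :=
      (mul_nonneg (by linarith) (sq_nonneg _)).trans (hbounds x).1
    refine (mul_le_mul_of_nonneg_right (show 2 * r ≤ 1 / 4 by linarith) hnonneg).trans <|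
      lyapunov_modeWeight hmodes (adjoint_eq_neg_of_hopping φ hJ') (hJ' 0) (hJ' 1) hC ?_ hc x
    field_simp
    norm_num

/-- on `ℓ²(ℤ)`, for the mode operator `C_n = R − J_n` of the Lorentz equation
and the weight operator `Y_n = I ∓ (i/(2n)) E_{0,1}/E_{1,0}`, `Y_n` is self-adjoint with
spectrum `{1 − 1/(2n), 1, 1 + 1/(2n)}`, satisfies `(1 − 1/(2n))I ≤ Y_n ≤ (1 + 1/(2n))I`, and
the Lyapunov inequality `C_n* Y_n + Y_n C_n ≥ 2λ₀ Y_n` holds with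
`λ₀ = 1/2 − 1/(6√2) − (1/3)√(7/16 + 1/√8)`. -/
theorem lorentz_mode_lyapunov_inequality
    {H : Type*} [NormedAddCommGroup H] [InnerProductSpace ℂ H] [CompleteSpace H]
    (φ : HilbertBasis ℤ ℂ H) (n : ℕ) (hn : 1 ≤ n)
    (R Jn Cn Yn : H →L[ℂ] H)
    (hR : ∀ j : ℤ, R (φ j) = if j = 0 then 0 else φ j)
    (hJ : ∀ j : ℤ, Jn (φ j) = (-(Complex.I * (n : ℂ) / 2)) • (φ (j + 1) + φ (j - 1)))
    (hC : Cn = R - Jn)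
    (hY : ∀ j : ℤ, Yn (φ j) = φ j
        + (if j = 1 then (-(Complex.I / (2 * (n : ℂ)))) • φ 0 else 0)
        + (if j = 0 then (Complex.I / (2 * (n : ℂ))) • φ 1 else 0)) :
    IsSelfAdjoint Yn ∧
    spectrum ℂ Yn = {((1 : ℂ) - 1 / (2 * (n : ℂ))), 1, ((1 : ℂ) + 1 / (2 * (n : ℂ)))} ∧
    (∀ x : H, (1 - 1 / (2 * (n : ℝ))) * ‖x‖ ^ 2 ≤ (⟪Yn x, x⟫_ℂ).re ∧
        (⟪Yn x, x⟫_ℂ).re ≤ (1 + 1 / (2 * (n : ℝ))) * ‖x‖ ^ 2) ∧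
    (∀ x : H,
      2 * (1 / 2 - 1 / (6 * Real.sqrt 2)
            - (1 / 3) * Real.sqrt (7 / 16 + 1 / Real.sqrt 8)) * (⟪Yn x, x⟫_ℂ).re
        ≤ (⟪(ContinuousLinearMap.adjoint Cn * Yn + Yn * Cn) x, x⟫_ℂ).re) := by
  have hn' : 1 ≤ |(n : ℝ)| := by simpa using hn
  simpa using lorentz_mode_lyapunov_inequality_general φ hn' hR (by simpa using hJ) hC
    (by simpa using hY) lorentz_rate_le
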